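/- Let n, n_u, n_ζ, l be positive integers, A an n×n real matrix, B an n×n_u real matrix, and for each j = 1,…,l let C_j be an n×n_ζ real matrix, K_j an n_q×n real matrix and G_j an n_q×n_u real matrix. Let Q (n×n) and R (n_u×n_u) be symmetric positive definite, let τ_1,…,τ_l > 0, and define E = R + Σ_j τ_j G_jᵀG_j, Υ = Σ_j τ_j K_jᵀG_j, S = Q + Σ_j τ_j K_jᵀK_j, M = Σ_j (1/τ_j) C_jC_jᵀ. Suppose X is a symmetric n×n matrix solving (A − B E⁻¹ Υᵀ)ᵀX + X(A − B E⁻¹ Υᵀ) + X(M − B E⁻¹ Bᵀ)X + (S − Υ E⁻¹ Υᵀ) = 0, and set G_τ = E⁻¹(BᵀX + Υᵀ). Then for every x ∈ ℝⁿ and every choice of vectors ζ_1,…,ζ_l ∈ ℝ^{n_ζ}, writing u = −G_τ x, the pointwise dissipation inequality 2·xᵀ X (A x + B u + Σ_j C_j ζ_j) + xᵀQ x + uᵀR u + Σ_{j=1}^l τ_j (‖K_j x + G_j u‖² − ‖ζ_j‖²) ≤ 0 holds. -/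

import Mathlib

open Matrix

/-!
Write `p = X x`. Because `R` is positive definite, so is `E`; hence `E` is invertible and
`E u = -(Bᵀ p + Υᵀ x)`. Evaluating the Riccati equation at `x` turns it into
`2 p ⬝ A x + p ⬝ M p + x ⬝ S x = u ⬝ E u`, while expanding the squares `‖K_j x + G_j u‖²` gives
`x ⬝ Q x + u ⬝ R u + ∑ τ_j ‖K_j x + G_j u‖² = x ⬝ S x + 2 x ⬝ Υ u + u ⬝ E u`. After these
substitutions all terms in `u` cancel, and the left-hand side of the inequality equals
`∑ (2 p ⬝ C_j ζ_j - τ_j ‖ζ_j‖² - τ_j⁻¹ ‖C_jᵀ p‖²)`, in which each summand is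
`-τ_j ‖ζ_j - τ_j⁻¹ C_jᵀ p‖² ≤ 0`.
-/

/-- Completion of the square in a single uncertainty input. -/
lemma two_mul_dotProduct_le {m : ℕ} {t : ℝ} (ht : 0 < t) (a z : Fin m → ℝ) :
    2 * (a ⬝ᵥ z) - t * (z ⬝ᵥ z) - t⁻¹ * (a ⬝ᵥ a) ≤ 0 := by
  have h : 0 ≤ t * ((z - t⁻¹ • a) ⬝ᵥ (z - t⁻¹ • a)) :=
    mul_nonneg ht.le (by simpa using dotProduct_star_self_nonneg (z - t⁻¹ • a))
  have e : t * ((z - t⁻¹ • a) ⬝ᵥ (z - t⁻¹ • a))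
      = t * (z ⬝ᵥ z) - 2 * (a ⬝ᵥ z) + t⁻¹ * (a ⬝ᵥ a) := by
    simp only [sub_dotProduct, dotProduct_sub, smul_dotProduct, dotProduct_smul, smul_eq_mul,
      dotProduct_comm z a]
    field_simp
    ring
  linarith

/-- The bilinear form of `∑ c_j F_jᵀ H_j`. -/
lemma dotProduct_sum_smul_mulVec {l q a b : ℕ} (c : Fin l → ℝ)
    (F : Fin l → Matrix (Fin q) (Fin a) ℝ) (H : Fin l → Matrix (Fin q) (Fin b) ℝ)
    (x : Fin a → ℝ) (y : Fin b → ℝ) :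
    x ⬝ᵥ (∑ j, c j • ((F j)ᵀ * H j)) *ᵥ y = ∑ j, c j * ((F j *ᵥ x) ⬝ᵥ (H j *ᵥ y)) := by
  simp only [sum_mulVec, dotProduct_sum, smul_mulVec, dotProduct_smul, smul_eq_mul,
    ← mulVec_mulVec]
  refine Finset.sum_congr rfl fun j _ => ?_
  rw [dotProduct_mulVec, vecMul_transpose]

/-- Pointwise dissipation (S-procedure) inequality provided by the game-type Riccati
equation solution for the minimax LQR controller `u = -Gτ x`. -/
theorem minimax_lqr_pointwise_dissipation
    (n nu nζ nq l : ℕ) (hn : 0 < n) (hnu : 0 < nu) (hnζ : 0 < nζ) (hl : 0 < l)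
    (A : Matrix (Fin n) (Fin n) ℝ) (B : Matrix (Fin n) (Fin nu) ℝ)
    (C : Fin l → Matrix (Fin n) (Fin nζ) ℝ)
    (K : Fin l → Matrix (Fin nq) (Fin n) ℝ)
    (G : Fin l → Matrix (Fin nq) (Fin nu) ℝ)
    (Q : Matrix (Fin n) (Fin n) ℝ) (R : Matrix (Fin nu) (Fin nu) ℝ)
    (hQsymm : Q.IsSymm) (hQ : Q.PosDef) (hRsymm : R.IsSymm) (hR : R.PosDef)
    (τ : Fin l → ℝ) (hτ : ∀ j, 0 < τ j)
    (E : Matrix (Fin nu) (Fin nu) ℝ) (hE : E = R + ∑ j, τ j • ((G j)ᵀ * G j))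
    (Υ : Matrix (Fin n) (Fin nu) ℝ) (hΥ : Υ = ∑ j, τ j • ((K j)ᵀ * G j))
    (S : Matrix (Fin n) (Fin n) ℝ) (hS : S = Q + ∑ j, τ j • ((K j)ᵀ * K j))
    (M : Matrix (Fin n) (Fin n) ℝ) (hM : M = ∑ j, (τ j)⁻¹ • (C j * (C j)ᵀ))
    (X : Matrix (Fin n) (Fin n) ℝ) (hXsymm : X.IsSymm)
    (hRic : (A - B * E⁻¹ * Υᵀ)ᵀ * X + X * (A - B * E⁻¹ * Υᵀ)
        + X * (M - B * E⁻¹ * Bᵀ) * X + (S - Υ * E⁻¹ * Υᵀ) = 0)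
    (Gτ : Matrix (Fin nu) (Fin n) ℝ) (hGτ : Gτ = E⁻¹ * (Bᵀ * X + Υᵀ))
    (x : Fin n → ℝ) (ζ : Fin l → Fin nζ → ℝ)
    (u : Fin nu → ℝ) (hu : u = -(Gτ.mulVec x)) :
    2 * (x ⬝ᵥ X.mulVec (A.mulVec x + B.mulVec u + ∑ j, (C j).mulVec (ζ j)))
      + x ⬝ᵥ Q.mulVec x + u ⬝ᵥ R.mulVec u
      + ∑ j, τ j * ((∑ i, (((K j).mulVec x + (G j).mulVec u) i) ^ 2)
          - ∑ i, (ζ j i) ^ 2) ≤ 0 := by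
  have hEpos : E.PosDef := by
    rw [hE]
    refine hR.add_posSemidef (posSemidef_sum _ fun j _ => ?_)
    have h := (posSemidef_conjTranspose_mul_self (G j)).smul (hτ j).le
    rwa [conjTranspose_eq_transpose_of_trivial] at h
  have hEdet : IsUnit E.det := (isUnit_iff_isUnit_det E).mp hEpos.isUnit
  have hEsymm : Eᵀ = E := by
    simpa [IsHermitian, conjTranspose_eq_transpose_of_trivial] using hEpos.isHermitian
  have hEinv : (E⁻¹)ᵀ = E⁻¹ := by rw [transpose_nonsing_inv, hEsymm]
  have hX : Xᵀ = X := hXsymm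
  -- The Riccati equation with its `E⁻¹` terms collected into a quadratic form in the gain.
  have hRic' : Aᵀ * X + X * A + X * M * X + S = Gτᵀ * E * Gτ := by
    have e : Gτᵀ * E * Gτ = (X * B + Υ) * E⁻¹ * (Bᵀ * X + Υᵀ) := by
      rw [hGτ]
      simp only [transpose_mul, transpose_add, transpose_transpose, hX, hEinv]
      rw [Matrix.mul_assoc _ E, ← Matrix.mul_assoc E, mul_nonsing_inv E hEdet, Matrix.one_mul]
    rw [e, ← sub_eq_zero, ← hRic]
    simp only [transpose_sub, transpose_mul, transpose_transpose, hEinv, Matrix.mul_add,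
      Matrix.add_mul, Matrix.mul_sub, Matrix.sub_mul, Matrix.mul_assoc]
    abel
  have hEu : E *ᵥ u = -((Bᵀ * X + Υᵀ) *ᵥ x) := by
    rw [hu, hGτ, mulVec_neg, mulVec_mulVec, ← Matrix.mul_assoc, mul_nonsing_inv E hEdet,
      Matrix.one_mul]
  obtain ⟨p, hp⟩ : ∃ p, p = X *ᵥ x := ⟨_, rfl⟩
  have hpX : ∀ w, x ⬝ᵥ X *ᵥ w = p ⬝ᵥ w := fun w => by
    rw [dotProduct_mulVec, hp, ← vecMul_transpose, hX]
  have hRicx : 2 * (p ⬝ᵥ A *ᵥ x) + p ⬝ᵥ M *ᵥ p + x ⬝ᵥ S *ᵥ x = u ⬝ᵥ E *ᵥ u := by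
    have h := congrArg (fun Z => x ⬝ᵥ Z *ᵥ x) hRic'
    simp only [add_mulVec, dotProduct_add, ← mulVec_mulVec, hpX, ← hp] at h
    have h1 : x ⬝ᵥ Aᵀ *ᵥ p = p ⬝ᵥ A *ᵥ x := by
      rw [dotProduct_mulVec, vecMul_transpose, dotProduct_comm]
    have h2 : x ⬝ᵥ Gτᵀ *ᵥ E *ᵥ Gτ *ᵥ x = u ⬝ᵥ E *ᵥ u := by
      rw [dotProduct_mulVec, vecMul_transpose, hu, mulVec_neg, neg_dotProduct_neg]
    linarith
  have hcross : p ⬝ᵥ B *ᵥ u + x ⬝ᵥ Υ *ᵥ u = -(u ⬝ᵥ E *ᵥ u) := by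
    rw [hEu, dotProduct_neg, neg_neg, add_mulVec, dotProduct_add, ← mulVec_mulVec, ← hp,
      dotProduct_mulVec u, vecMul_transpose, dotProduct_mulVec u, vecMul_transpose,
      dotProduct_comm p, dotProduct_comm x]
  have hEq : u ⬝ᵥ E *ᵥ u = u ⬝ᵥ R *ᵥ u + ∑ j, τ j * ((G j *ᵥ u) ⬝ᵥ (G j *ᵥ u)) := by
    rw [hE, add_mulVec, dotProduct_add, dotProduct_sum_smul_mulVec]
  have hSq : x ⬝ᵥ S *ᵥ x = x ⬝ᵥ Q *ᵥ x + ∑ j, τ j * ((K j *ᵥ x) ⬝ᵥ (K j *ᵥ x)) := by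
    rw [hS, add_mulVec, dotProduct_add, dotProduct_sum_smul_mulVec]
  have hΥq : x ⬝ᵥ Υ *ᵥ u = ∑ j, τ j * ((K j *ᵥ x) ⬝ᵥ (G j *ᵥ u)) := by
    rw [hΥ, dotProduct_sum_smul_mulVec]
  have hMq : p ⬝ᵥ M *ᵥ p = ∑ j, (τ j)⁻¹ * (((C j)ᵀ *ᵥ p) ⬝ᵥ ((C j)ᵀ *ᵥ p)) := by
    simpa [hM] using
      dotProduct_sum_smul_mulVec (fun j => (τ j)⁻¹) (fun j => (C j)ᵀ) (fun j => (C j)ᵀ) p p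
  have hsq : ∑ j, τ j * ((∑ i, ((K j *ᵥ x + G j *ᵥ u) i) ^ 2) - ∑ i, (ζ j i) ^ 2)
      = ∑ j, τ j * ((K j *ᵥ x) ⬝ᵥ (K j *ᵥ x)) + 2 * ∑ j, τ j * ((K j *ᵥ x) ⬝ᵥ (G j *ᵥ u))
        + ∑ j, τ j * ((G j *ᵥ u) ⬝ᵥ (G j *ᵥ u)) - ∑ j, τ j * (ζ j ⬝ᵥ ζ j) := by
    rw [Finset.mul_sum, ← Finset.sum_add_distrib, ← Finset.sum_add_distrib,
      ← Finset.sum_sub_distrib]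
    refine Finset.sum_congr rfl fun j _ => ?_
    have h (m : ℕ) (w : Fin m → ℝ) : ∑ i, (w i) ^ 2 = w ⬝ᵥ w := by
      simp only [dotProduct, sq]
    rw [h, h, add_dotProduct, dotProduct_add, dotProduct_add,
      dotProduct_comm (G j *ᵥ u) (K j *ᵥ x)]
    ring
  have hC : p ⬝ᵥ ∑ j, C j *ᵥ ζ j = ∑ j, ((C j)ᵀ *ᵥ p) ⬝ᵥ ζ j := by
    rw [dotProduct_sum]
    refine Finset.sum_congr rfl fun j _ => ?_
    rw [dotProduct_mulVec, mulVec_transpose]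
  have hfin := Finset.sum_nonpos fun j (_ : j ∈ Finset.univ) =>
    two_mul_dotProduct_le (hτ j) ((C j)ᵀ *ᵥ p) (ζ j)
  rw [Finset.sum_sub_distrib, Finset.sum_sub_distrib, ← Finset.mul_sum] at hfin
  rw [hsq, hpX, dotProduct_add, dotProduct_add, hC]
  linarith
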